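/- There exists a constant C = C(n) > 0, depending only on n, such that for every d ≥ 1 the probability that the top-degree homogeneous parts of a random Bernoulli system have a common zero in the algebraic torus, i.e. Prob_d{ε : ∃ x ∈ (ℂ \ {0})^n with Σ_{J ∈ A_d, |J| = d} ε_{i,J} x^J = 0 for all i = 1, …, n}, is at most C/d. -/

import Mathlib

/-!
The bound comes from combining anti-concentration for random signed sums with a double sampling
argument, which replaces any use of elimination theory.

Torus zeros of forms may be normalised to `x = (1, u)`. If `y` is a coordinate of `u`, the
monomials `x₀ ^ (d - j) * xᵢ ^ j` contribute the terms `± y ^ j`, `j ≤ d`, to the value of a top-degree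
form at `x`, so the probability that it vanishes is at most the largest atom of
`∑ ± y ^ j` (`signCount_le_of_injective`).

* If `y` is not a root of unity of order at most a constant `K(n)`, this atom is at most
  `1 / (2 n d ^ n)` for large `d` (`signCount_line_le`). When `y` has degree at least `2 n + 1`
  over `ℚ` or is transcendental, the powers of `y` split into blocks of `2 n + 1` vectors independent over `ℤ`, and a
  Halász-type comparison with a product of simple random walks applies; here distributions are
  elements of the group semiring `ℕ[ℂ]`. When `y` has small degree, only finitely many powers of
  `y` can be roots of polynomials with coefficients in `{-1, 0, 1}`, hence for a bounded `m` the
  signed sums of powers of `y ^ m` are pairwise distinct.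
* Points with such a coordinate form an infinite set, which is handled by `double_sampling`: add to
  the `n` given forms a grid of `n × L` independent ones, `L = d ^ n`. If the given forms vanish at
  some `x`, then with probability at least `1 / 2` no form of the grid vanishes at the same `x`.
  Writing the given forms over a transversal of the grid, one sees a zero pattern equal to that
  transversal; but `n L` polynomials of degree `d` in `n - 1` variables have only
  `(n L d + 1) ^ (n - 1)` zero patterns (`card_patterns_le`), against `L ^ n` transversals. The
  resulting bound is `2 (n L d + 1) ^ (n - 1) / L ^ n = O(1 / d)`.
* The remaining points have all coordinates of `u` among finitely many roots of unity, independent of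
  `d`. At each of them two independent forms vanish with probability at most `2 / (d + 1)`
  (`card_good_le`).
-/
open MeasureTheory Filter
open scoped Classical

/-- The set of exponent vectors `J` with `J₁ + ⋯ + Jₙ ≤ d` (each coordinate is then `≤ d`). -/
abbrev Idx (n d : ℕ) := {J : Fin n → Fin (d + 1) // (∑ j, (J j : ℕ)) ≤ d}

/-- A sign choice `ε = (ε_{i,J})`, with `true ↦ 1` and `false ↦ -1`. -/
abbrev Signs (n d : ℕ) := Fin n → Idx n d → Bool

noncomputable def sgn (b : Bool) : ℂ := if b then 1 else -1

/-- The `i`-th Bernoulli polynomial of the system, evaluated at `x`. -/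
noncomputable def fSys (n d : ℕ) (ε : Signs n d) (i : Fin n) (x : Fin n → ℂ) : ℂ :=
  ∑ J : Idx n d, sgn (ε i J) * ∏ j, x j ^ (J.1 j : ℕ)

/-- The set of simultaneous zeros of the system. -/
def Zset (n d : ℕ) (ε : Signs n d) : Set (Fin n → ℂ) :=
  {x | ∀ i, fSys n d ε i x = 0}

/-- Uniform probability of an event on the finite space of sign choices. -/
noncomputable def Pd (n d : ℕ) (E : Set (Signs n d)) : ℝ :=
  (E.ncard : ℝ) / (Fintype.card (Signs n d) : ℝ)

/-- The top-degree homogeneous part of the `i`-th Bernoulli polynomial, evaluated at `x`. -/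
noncomputable def fTop (n d : ℕ) (ε : Signs n d) (i : Fin n) (x : Fin n → ℂ) : ℂ :=
  ∑ J ∈ Finset.univ.filter (fun J : Idx n d => (∑ j, (J.1 j : ℕ)) = d),
    sgn (ε i J) * ∏ j, x j ^ (J.1 j : ℕ)


/-! ### Sums of independent signs -/

open AddMonoidAlgebra in
/-- The element `T^v + T^(-v)` of the group semiring `ℕ[ℂ]`; up to normalisation, it is the law of
`± v`. Products of such elements are the laws of sums of independent signs. -/
noncomputable def signLaw (v : ℂ) : AddMonoidAlgebra ℕ ℂ := single v 1 + single (-v) 1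

/-- Number of sign vectors for which the signed sum of the `v j` equals `c`. -/
noncomputable def signCount {κ : Type*} [Fintype κ] (v : κ → ℂ) (c : ℂ) : ℕ :=
  (Finset.univ.filter fun ε : κ → Bool => ∑ j, sgn (ε j) * v j = c).card

/-- An element of the group semiring which is invariant under `g ↦ -g`. -/
def SymmLaw (α : AddMonoidAlgebra ℕ ℂ) : Prop := ∀ g, α.coeff (-g) = α.coeff g

lemma signLaw_eq_sum (v : ℂ) :
    signLaw v = ∑ b : Bool, AddMonoidAlgebra.single (sgn b * v) 1 := by
  simp [signLaw, sgn]

lemma prod_single_one {κ : Type*} (s : Finset κ) (f : κ → ℂ) :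
    ∏ j ∈ s, AddMonoidAlgebra.single (f j) (1 : ℕ) = AddMonoidAlgebra.single (∑ j ∈ s, f j) 1 := by
  induction s using Finset.induction_on with
  | empty => simp [AddMonoidAlgebra.one_def]
  | insert a s ha ih => simp [Finset.prod_insert ha, Finset.sum_insert ha, ih]

lemma coeff_prod_signLaw {κ : Type*} [Fintype κ] (v : κ → ℂ) (c : ℂ) :
    (∏ j, signLaw (v j)).coeff c = signCount v c := by
  simp_rw [signLaw_eq_sum]
  rw [Finset.prod_univ_sum]
  simp_rw [prod_single_one]
  rw [AddMonoidAlgebra.coeff_sum, Finsupp.finsetSum_apply]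
  simp only [AddMonoidAlgebra.coeff_single, Finsupp.single_apply, Finset.sum_boole, Nat.cast_id]
  rw [signCount]
  congr 1

lemma symmLaw_signLaw (v : ℂ) : SymmLaw (signLaw v) := by
  intro g
  simp only [signLaw, AddMonoidAlgebra.coeff_add, AddMonoidAlgebra.coeff_single, Finsupp.add_apply,
    Finsupp.single_apply, neg_inj]
  rw [add_comm]
  simp only [neg_eq_iff_eq_neg]

lemma SymmLaw.mul {α β : AddMonoidAlgebra ℕ ℂ} (hα : SymmLaw α) (hβ : SymmLaw β) :
    SymmLaw (α * β) := by
  intro g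
  rw [AddMonoidAlgebra.coeff_mul_apply_left, AddMonoidAlgebra.coeff_mul_apply_left]
  refine Finset.sum_nbij' (fun x => -x) (fun x => -x) ?_ ?_ ?_ ?_ ?_
  · intro x hx
    simpa [Finsupp.mem_support_iff, hα x] using hx
  · intro x hx
    simpa [Finsupp.mem_support_iff, hα x] using hx
  · simp
  · simp
  · intro x hx
    simp only [hα x, neg_neg]
    rw [← hβ (-x + -g)]
    congr 2
    ring

lemma symmLaw_one : SymmLaw 1 := by
  intro g
  simp [AddMonoidAlgebra.one_def, AddMonoidAlgebra.coeff_single, Finsupp.single_apply, eq_comm]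

lemma SymmLaw.prod {κ : Type*} (s : Finset κ) {μ : κ → AddMonoidAlgebra ℕ ℂ}
    (h : ∀ j, SymmLaw (μ j)) : SymmLaw (∏ j ∈ s, μ j) :=
  Finset.prod_induction _ _ (fun _ _ => SymmLaw.mul) symmLaw_one fun j _ => h j

/-- The atoms of a sum of two independent variables are controlled by the return probabilities
of the two variables: this is `2 * a * b ≤ a ^ 2 + b ^ 2`. -/
lemma two_mul_coeff_mul_le {α β : AddMonoidAlgebra ℕ ℂ} (hα : SymmLaw α) (hβ : SymmLaw β) (c : ℂ) :
    2 * (α * β).coeff c ≤ (α * α).coeff 0 + (β * β).coeff 0 := by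
  have sq : ∀ {γ : AddMonoidAlgebra ℕ ℂ}, SymmLaw γ →
      (γ * γ).coeff 0 = ∑ g ∈ γ.coeff.support, γ.coeff g ^ 2 := by
    intro γ hγ
    rw [AddMonoidAlgebra.coeff_mul_apply_left]
    refine Finset.sum_congr rfl fun g _ => ?_
    simp [hγ g, sq]
  rw [sq hα, sq hβ, AddMonoidAlgebra.coeff_mul_apply_left, Finsupp.sum, Finset.mul_sum]
  have h1 : ∑ g ∈ α.coeff.support, β.coeff (-g + c) ^ 2 ≤ ∑ g ∈ β.coeff.support, β.coeff g ^ 2 := by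
    have hinj : Set.InjOn (fun g : ℂ => -g + c) (α.coeff.support : Set ℂ) := by
      intro a _ b _ hab
      simpa using hab
    rw [← Finset.sum_image (f := fun g => β.coeff g ^ 2) hinj]
    refine Finset.sum_le_sum_of_ne_zero ?_
    intro x _ hx
    rw [Finsupp.mem_support_iff]
    rintro h
    simp [h] at hx
  calc ∑ g ∈ α.coeff.support, 2 * (α.coeff g * β.coeff (-g + c))
      ≤ ∑ g ∈ α.coeff.support, (α.coeff g ^ 2 + β.coeff (-g + c) ^ 2) := by
        refine Finset.sum_le_sum fun g _ => ?_
        have := two_mul_le_add_sq (α.coeff g) (β.coeff (-g + c))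
        linarith
    _ ≤ _ := by
        rw [Finset.sum_add_distrib]
        exact Nat.add_le_add_left h1 _

/-- The probability that a sum of `2 ^ s` independent symmetric variables vanishes is at most the
average of these probabilities for `2 ^ s` independent copies of a single one of the variables:
split the variables into two halves and induct. -/
lemma coeff_zero_prod_le (s : ℕ) : ∀ μ : ℕ → AddMonoidAlgebra ℕ ℂ, (∀ b, SymmLaw (μ b)) →
    2 ^ s * (∏ b ∈ Finset.range (2 ^ s), μ b).coeff 0 ≤
      ∑ b ∈ Finset.range (2 ^ s), (μ b ^ 2 ^ s).coeff 0 := by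
  induction s with
  | zero => intro μ _; simp
  | succ s ih =>
    intro μ hμ
    have h2 : 2 ^ (s + 1) = 2 ^ s + 2 ^ s := by ring
    have key := two_mul_coeff_mul_le
      (SymmLaw.prod (Finset.range (2 ^ s)) hμ)
      (SymmLaw.prod (Finset.range (2 ^ s)) fun b => hμ (2 ^ s + b)) 0
    have i1 := ih (fun b => μ b * μ b) fun b => (hμ b).mul (hμ b)
    have i2 := ih (fun b => μ (2 ^ s + b) * μ (2 ^ s + b)) fun b => (hμ _).mul (hμ _)
    rw [Finset.prod_mul_distrib] at i1 i2
    simp_rw [← pow_two, ← pow_mul, ← pow_succ'] at i1 i2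
    rw [← pow_two, ← pow_two] at key
    rw [show Finset.range (2 ^ (s + 1)) = Finset.range (2 ^ s + 2 ^ s) by rw [h2],
      Finset.prod_range_add, Finset.sum_range_add, pow_succ 2 s, mul_assoc]
    simp only [pow_succ 2 s] at i1 i2
    exact (Nat.mul_le_mul_left _ key).trans (by rw [mul_add]; exact Nat.add_le_add i1 i2)

/-- Halász-type decoupling: the atoms of a sum of `2 ^ (s + 1)` independent symmetric variables are
at most the average, over the variables, of the probability that a sum of `2 ^ (s + 1)` independent
copies of this variable vanishes. -/
lemma coeff_prod_le (s : ℕ) (μ : ℕ → AddMonoidAlgebra ℕ ℂ) (hμ : ∀ b, SymmLaw (μ b)) (c : ℂ) :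
    2 ^ (s + 1) * (∏ b ∈ Finset.range (2 ^ (s + 1)), μ b).coeff c ≤
      ∑ b ∈ Finset.range (2 ^ (s + 1)), (μ b ^ 2 ^ (s + 1)).coeff 0 := by
  have h2 : 2 ^ (s + 1) = 2 ^ s + 2 ^ s := by ring
  have key := two_mul_coeff_mul_le
    (SymmLaw.prod (Finset.range (2 ^ s)) hμ)
    (SymmLaw.prod (Finset.range (2 ^ s)) fun b => hμ (2 ^ s + b)) c
  have i1 := coeff_zero_prod_le s (fun b => μ b * μ b) fun b => (hμ b).mul (hμ b)
  have i2 := coeff_zero_prod_le s (fun b => μ (2 ^ s + b) * μ (2 ^ s + b))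
    fun b => (hμ _).mul (hμ _)
  rw [Finset.prod_mul_distrib] at i1 i2
  simp_rw [← pow_two, ← pow_mul, ← pow_succ'] at i1 i2
  rw [← pow_two, ← pow_two] at key
  rw [show Finset.range (2 ^ (s + 1)) = Finset.range (2 ^ s + 2 ^ s) by rw [h2],
    Finset.prod_range_add, Finset.sum_range_add, pow_succ 2 s, mul_assoc]
  simp only [pow_succ 2 s] at i1 i2
  exact (Nat.mul_le_mul_left _ key).trans (by rw [mul_add]; exact Nat.add_le_add i1 i2)

/-- Adding further independent signs can only lower the largest atom. -/
lemma coeff_mul_prod_signLaw_le {κ : Type*} (s : Finset κ) (v : κ → ℂ)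
    {α : AddMonoidAlgebra ℕ ℂ} {B : ℕ} (h : ∀ c, α.coeff c ≤ B) (c : ℂ) :
    (α * ∏ j ∈ s, signLaw (v j)).coeff c ≤ B * 2 ^ s.card := by
  induction s using Finset.induction_on generalizing c with
  | empty => simpa using h c
  | insert a s ha ih =>
    rw [Finset.prod_insert ha, Finset.card_insert_of_notMem ha, mul_left_comm, signLaw, add_mul,
      AddMonoidAlgebra.coeff_add, Finsupp.add_apply, AddMonoidAlgebra.coeff_single_mul_apply,
      AddMonoidAlgebra.coeff_single_mul_apply, pow_succ]
    have h1 := ih (-v a + c)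
    have h2 := ih (- -v a + c)
    linarith

lemma signCount_le_of_injective {κ ι : Type*} [Fintype κ] [Fintype ι] (e : κ → ι)
    (he : Function.Injective e) (v : ι → ℂ) {B : ℕ}
    (h : ∀ c, signCount (fun j => v (e j)) c ≤ B) (c : ℂ) :
    signCount v c * 2 ^ Fintype.card κ ≤ B * 2 ^ Fintype.card ι := by
  have h1 : ∏ j, signLaw (v j) =
      (∏ j, signLaw (v (e j))) * ∏ j ∈ (Finset.univ.image e)ᶜ, signLaw (v j) := by
    rw [← Finset.prod_mul_prod_compl (Finset.univ.image e),
      Finset.prod_image he.injOn]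
  have h2 : (∏ j, signLaw (v j)).coeff c ≤ B * 2 ^ ((Finset.univ.image e)ᶜ).card := by
    rw [h1]
    exact coeff_mul_prod_signLaw_le _ _ (fun c => by rw [coeff_prod_signLaw]; exact h c) c
  rw [coeff_prod_signLaw] at h2
  have h3 : ((Finset.univ.image e)ᶜ).card + Fintype.card κ = Fintype.card ι := by
    rw [← Finset.card_compl_add_card (Finset.univ.image e), Finset.card_image_of_injective _ he,
      Finset.card_univ]
  calc _ ≤ B * 2 ^ ((Finset.univ.image e)ᶜ).card * 2 ^ Fintype.card κ := Nat.mul_le_mul_right _ h2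
    _ = _ := by rw [mul_assoc, ← pow_add, h3]

lemma signCount_le_card {κ : Type*} [Fintype κ] (v : κ → ℂ) (c : ℂ) :
    signCount v c ≤ 2 ^ Fintype.card κ := by
  refine (Finset.card_le_univ _).trans ?_
  simp

lemma centralBinom_sq_le (r : ℕ) : r.centralBinom ^ 2 * (2 * r + 1) ≤ 16 ^ r := by
  induction r with
  | zero => simp
  | succ r ih =>
    have h := Nat.succ_mul_centralBinom_succ r
    have h2 : (r + 1) ^ 2 * ((r + 1).centralBinom ^ 2 * (2 * (r + 1) + 1)) ≤
        (r + 1) ^ 2 * 16 ^ (r + 1) := by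
      calc _ = ((r + 1) * (r + 1).centralBinom) ^ 2 * (2 * r + 3) := by ring
        _ = (r.centralBinom ^ 2 * (2 * r + 1)) * (4 * ((2 * r + 1) * (2 * r + 3))) := by
          rw [h]; ring
        _ ≤ 16 ^ r * (4 * ((2 * r + 1) * (2 * r + 3))) := Nat.mul_le_mul_right _ ih
        _ ≤ 16 ^ r * (16 * (r + 1) ^ 2) := Nat.mul_le_mul_left _ (by nlinarith)
        _ = _ := by ring
    exact Nat.le_of_mul_le_mul_left h2 (by positivity)

/-- For `v` linearly independent over `ℤ`, the walk of `2 * r` steps of the form `∑ ± v i` returns to `0`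
exactly when each of its coordinates does. -/
lemma coeff_zero_prod_pow {k : ℕ} (v : Fin k → ℂ)
    (hv : ∀ a : Fin k → ℤ, ∑ i, (a i : ℂ) * v i = 0 → a = 0) (r : ℕ) :
    ((∏ i, signLaw (v i)) ^ (2 * r)).coeff 0 = r.centralBinom ^ k := by
  have h1 : ∀ i, signLaw (v i) ^ (2 * r) = ∑ l ∈ Finset.range (2 * r + 1),
      AddMonoidAlgebra.single (((2 * l - 2 * r : ℤ) : ℂ) * v i) ((2 * r).choose l) := by
    intro i
    rw [signLaw, add_pow]
    refine Finset.sum_congr rfl fun l hl => ?_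
    have hl' : l ≤ 2 * r := by simpa [Nat.lt_succ_iff] using hl
    rw [AddMonoidAlgebra.single_pow, AddMonoidAlgebra.single_pow, one_pow, one_pow,
      AddMonoidAlgebra.single_mul_single, AddMonoidAlgebra.natCast_def,
      AddMonoidAlgebra.single_mul_single]
    congr 1
    · simp only [nsmul_eq_mul, Nat.cast_sub hl']
      push_cast
      ring
    · simp
  rw [← Finset.prod_pow]
  simp_rw [h1]
  rw [Finset.prod_univ_sum]
  have h2 : ∀ x : Fin k → ℕ, ∏ i, AddMonoidAlgebra.single (((2 * x i - 2 * r : ℤ) : ℂ) * v i)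
      ((2 * r).choose (x i)) = AddMonoidAlgebra.single (∑ i, ((2 * x i - 2 * r : ℤ) : ℂ) * v i)
      (∏ i, (2 * r).choose (x i)) := by
    intro x
    exact AddMonoidAlgebra.prod_single ..
  simp_rw [h2]
  rw [AddMonoidAlgebra.coeff_sum, Finsupp.finsetSum_apply,
    Finset.sum_eq_single (fun _ => r)]
  · simp [AddMonoidAlgebra.coeff_single, Nat.centralBinom]
  · intro x _ hx
    rw [AddMonoidAlgebra.coeff_single, Finsupp.single_apply, if_neg]
    intro h0
    apply hx
    have := hv _ h0
    funext i
    have hi := congrFun this i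
    simp only [Pi.zero_apply] at hi
    omega
  · intro h
    exfalso
    apply h
    simp [Fintype.mem_piFinset]
    omega

/-! ### Signed sums along a geometric progression -/

lemma prod_range_mul' {M : Type*} [CommMonoid M] (f : ℕ → M) (m k : ℕ) :
    ∏ j ∈ Finset.range (m * k), f j =
      ∏ b ∈ Finset.range m, ∏ i ∈ Finset.range k, f (b * k + i) := by
  induction m with
  | zero => simp
  | succ m ih => rw [Nat.succ_mul, Finset.prod_range_add, ih, Finset.prod_range_succ]

/-- If `1, y, …, y ^ (k - 1)` are linearly independent over `ℤ`, each atom of the random sum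
`∑ ± a * y ^ j` over `j < N` has probability `O(N ^ (-k / 2))`: the progression splits into blocks
of `k` consecutive terms, each of which is linearly independent. -/
lemma signCount_geom_sq_le {k : ℕ} (hk : 1 ≤ k) {y a : ℂ} (hy : y ≠ 0) (ha : a ≠ 0)
    (hv : ∀ u : Fin k → ℤ, ∑ i, (u i : ℂ) * y ^ (i : ℕ) = 0 → u = 0) (N : ℕ) (c : ℂ) :
    signCount (fun j : Fin N => a * y ^ (j : ℕ)) c ^ 2 * N ^ k ≤ (2 * k) ^ k * 4 ^ N := by
  have h4 : ∀ N : ℕ, 4 ^ N = (2 ^ N) ^ 2 := fun N => by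
    rw [← pow_mul, mul_comm, pow_mul]; norm_num
  rcases lt_or_ge N (2 * k) with hN | hN
  · have h := signCount_le_card (fun j : Fin N => a * y ^ (j : ℕ)) c
    rw [Fintype.card_fin] at h
    rw [mul_comm, h4]
    exact Nat.mul_le_mul (Nat.pow_le_pow_left hN.le _) (Nat.pow_le_pow_left h _)
  · obtain ⟨s, hs1, hs2⟩ : ∃ s : ℕ, 2 ^ (s + 1) * k ≤ N ∧ N ≤ 2 * 2 ^ (s + 1) * k := by
      have hq : 2 ≤ N / k := (Nat.le_div_iff_mul_le hk).2 hN
      have hl : 1 ≤ Nat.log 2 (N / k) := Nat.log_pos (by norm_num) hq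
      refine ⟨Nat.log 2 (N / k) - 1, ?_, ?_⟩
      · rw [Nat.sub_add_cancel hl]
        exact (Nat.le_div_iff_mul_le hk).1 (Nat.pow_log_le_self 2 (by omega))
      · rw [Nat.sub_add_cancel hl, ← pow_succ']
        have := Nat.lt_pow_succ_log_self (b := 2) (by norm_num) (N / k)
        exact ((Nat.div_lt_iff_lt_mul hk).1 this).le
    set m := 2 ^ (s + 1) with hm
    set B := (2 ^ s).centralBinom ^ k with hB
    have hblock : ∀ c, (∏ j ∈ Finset.range (m * k), signLaw (a * y ^ j)).coeff c ≤ B := by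
      intro c
      rw [prod_range_mul']
      have h := coeff_prod_le s
        (fun b => ∏ i ∈ Finset.range k, signLaw (a * y ^ (b * k + i)))
        (fun b => SymmLaw.prod _ fun i => symmLaw_signLaw _) c
      have h0 : ∀ b : ℕ, ((∏ i ∈ Finset.range k, signLaw (a * y ^ (b * k + i))) ^
          2 ^ (s + 1)).coeff 0 = B := by
        intro b
        rw [← Fin.prod_univ_eq_prod_range (fun i => signLaw (a * y ^ (b * k + i))), pow_succ' 2 s]
        apply coeff_zero_prod_pow
        intro u hu
        apply hv
        have : a * y ^ (b * k) * ∑ i, (u i : ℂ) * y ^ (i : ℕ) = 0 := by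
          rw [← hu, Finset.mul_sum]
          refine Finset.sum_congr rfl fun i _ => ?_
          ring
        exact (mul_eq_zero.1 this).resolve_left (mul_ne_zero ha (pow_ne_zero _ hy))
      simp_rw [h0] at h
      rw [Finset.sum_const, Finset.card_range, smul_eq_mul] at h
      exact Nat.le_of_mul_le_mul_left h (by positivity)
    have hall : signCount (fun j : Fin N => a * y ^ (j : ℕ)) c ≤ B * 2 ^ (N - m * k) := by
      rw [← coeff_prod_signLaw, Fin.prod_univ_eq_prod_range (fun j => signLaw (a * y ^ j))]
      obtain ⟨t, rfl⟩ := Nat.exists_eq_add_of_le hs1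
      rw [Finset.prod_range_add]
      have := coeff_mul_prod_signLaw_le (Finset.range t) (fun x => a * y ^ (m * k + x)) hblock c
      rw [Finset.card_range] at this
      rwa [Nat.add_sub_cancel_left]
    have hcb : (2 ^ s).centralBinom ^ 2 * m ≤ 4 ^ m := by
      have := centralBinom_sq_le (2 ^ s)
      have h16 : (16 : ℕ) ^ 2 ^ s = 4 ^ m := by
        rw [hm, show (16 : ℕ) = 4 ^ 2 by norm_num, ← pow_mul, ← pow_succ']
      rw [h16, ← pow_succ', ← hm] at this
      exact (Nat.mul_le_mul_left _ (Nat.le_succ m)).trans this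
    calc signCount (fun j : Fin N => a * y ^ (j : ℕ)) c ^ 2 * N ^ k
        ≤ (B * 2 ^ (N - m * k)) ^ 2 * (2 * m * k) ^ k := by gcongr
      _ = (2 * k) ^ k * ((((2 ^ s).centralBinom ^ 2 * m) ^ k) * 4 ^ (N - m * k)) := by
        rw [hB, h4]; simp only [mul_pow, ← pow_mul]; ring
      _ ≤ (2 * k) ^ k * (((4 ^ m) ^ k) * 4 ^ (N - m * k)) := by gcongr
      _ = (2 * k) ^ k * 4 ^ N := by
        rw [← pow_mul, ← pow_add, Nat.add_sub_cancel' hs1]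

/-- Signed sums of `a, a * z, a * z ^ 2, …` are pairwise distinct if the powers of `z` satisfy no
nontrivial relation with coefficients in `{-1, 0, 1}`. -/
lemma signCount_le_one {M : ℕ} {a z : ℂ} (ha : a ≠ 0)
    (hz : ∀ u : Fin M → ℤ, (∀ i, |u i| ≤ 1) → ∑ i, (u i : ℂ) * z ^ (i : ℕ) = 0 → u = 0) (c : ℂ) :
    signCount (fun j : Fin M => a * z ^ (j : ℕ)) c ≤ 1 := by
  refine Finset.card_le_one.2 fun ε hε ε' hε' => ?_
  simp only [Finset.mem_filter, Finset.mem_univ, true_and] at hε hε'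
  have hu := hz (fun i => if ε i = ε' i then 0 else if ε i then 1 else -1)
    (fun i => by split_ifs <;> simp) (by
      have h : 2 * a * ∑ i, (((if ε i = ε' i then 0 else if ε i then 1 else -1 : ℤ) : ℤ) : ℂ) *
          z ^ (i : ℕ) = 0 := by
        rw [← sub_self c]
        nth_rewrite 1 [← hε]
        rw [← hε', ← Finset.sum_sub_distrib, Finset.mul_sum]
        refine Finset.sum_congr rfl fun i _ => ?_
        cases ε i <;> cases ε' i <;> simp [sgn] <;> ring
      exact (mul_eq_zero.1 h).resolve_left (mul_ne_zero two_ne_zero ha))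
  funext i
  have hi := congrFun hu i
  simp only [Pi.zero_apply] at hi
  by_contra hne
  rw [if_neg hne] at hi
  split_ifs at hi
  all_goals simp at hi

/-- `z` is algebraic of degree less than `k`. -/
def LowDeg (k : ℕ) (z : ℂ) : Prop := IsIntegral ℚ z ∧ (minpoly ℚ z).natDegree < k

/-- `z` is a root of a nonzero polynomial with coefficients in `{-1, 0, 1}`. -/
def FlatRoot (z : ℂ) : Prop :=
  ∃ p : Polynomial ℤ, p ≠ 0 ∧ (∀ i, |p.coeff i| ≤ 1) ∧ Polynomial.aeval z p = 0

lemma LowDeg.pow {k : ℕ} {z : ℂ} (h : LowDeg k z) (m : ℕ) : LowDeg k (z ^ m) := by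
  refine ⟨h.1.pow m, lt_of_le_of_lt ?_ h.2⟩
  have := IntermediateField.adjoin.finiteDimensional h.1
  rw [← IntermediateField.adjoin.finrank h.1, ← IntermediateField.adjoin.finrank (h.1.pow m)]
  have hle : IntermediateField.adjoin ℚ {z ^ m} ≤ IntermediateField.adjoin ℚ {z} := by
    rw [IntermediateField.adjoin_simple_le_iff]
    exact pow_mem (IntermediateField.mem_adjoin_simple_self ℚ z) m
  exact Submodule.finrank_mono (R := ℚ) (M := ℂ) 
    (s := (IntermediateField.adjoin ℚ {z ^ m}).toSubalgebra.toSubmodule) 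
    (t := (IntermediateField.adjoin ℚ {z}).toSubalgebra.toSubmodule) hle

/-- The polynomial with coefficient vector `u`. -/
noncomputable def vecPoly {k : ℕ} (u : Fin k → ℤ) : Polynomial ℤ :=
  ∑ i : Fin k, Polynomial.monomial (i : ℕ) (u i)

lemma vecPoly_coeff {k : ℕ} (u : Fin k → ℤ) (j : ℕ) :
    (vecPoly u).coeff j = if h : j < k then u ⟨j, h⟩ else 0 := by
  rw [vecPoly, Polynomial.finsetSum_coeff]
  simp_rw [Polynomial.coeff_monomial]
  split_ifs with h
  · rw [Finset.sum_eq_single ⟨j, h⟩]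
    · simp
    · intro b _ hb
      rw [if_neg]
      intro hb'
      exact hb (Fin.ext hb')
    · simp
  · refine Finset.sum_eq_zero fun i _ => ?_
    rw [if_neg]
    have := i.2
    omega

lemma vecPoly_eq_zero {k : ℕ} {u : Fin k → ℤ} (h : vecPoly u = 0) : u = 0 := by
  funext i
  have := vecPoly_coeff u i
  rw [h, dif_pos i.2] at this
  simpa using this.symm

lemma aeval_vecPoly {k : ℕ} (u : Fin k → ℤ) (z : ℂ) :
    Polynomial.aeval z (vecPoly u) = ∑ i, (u i : ℂ) * z ^ (i : ℕ) := by
  simp [vecPoly, Polynomial.aeval_monomial]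

lemma eq_zero_of_not_lowDeg {k : ℕ} {y : ℂ} (h : ¬ LowDeg k y) (u : Fin k → ℤ)
    (hu : ∑ i, (u i : ℂ) * y ^ (i : ℕ) = 0) : u = 0 := by
  by_contra hne
  apply h
  have h0 : vecPoly u ≠ 0 := fun h0 => hne (vecPoly_eq_zero h0)
  have hinj : Function.Injective (algebraMap ℤ ℚ) := by simpa using Int.cast_injective
  have hq0 : (vecPoly u).map (algebraMap ℤ ℚ) ≠ 0 :=
    (Polynomial.map_ne_zero_iff hinj).2 h0
  have hroot : Polynomial.aeval y ((vecPoly u).map (algebraMap ℤ ℚ)) = 0 := by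
    rw [Polynomial.aeval_map_algebraMap, aeval_vecPoly, hu]
  refine ⟨isAlgebraic_iff_isIntegral.1 ⟨_, hq0, hroot⟩, ?_⟩
  refine lt_of_le_of_lt
    (Polynomial.natDegree_le_natDegree (minpoly.degree_le_of_ne_zero ℚ y hq0 hroot)) ?_
  rw [Polynomial.natDegree_map_eq_of_injective hinj]
  have hk : k ≠ 0 := by
    rintro rfl
    exact hne (Subsingleton.elim _ _)
  rw [Polynomial.natDegree_lt_iff_degree_lt h0, Polynomial.degree_lt_iff_coeff_zero]
  intro m hm
  rw [vecPoly_coeff, dif_neg (by omega)]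

lemma norm_le_two_of_flatRoot {z : ℂ} (h : FlatRoot z) : ‖z‖ ≤ 2 := by
  obtain ⟨p, hp0, hp, hz⟩ := h
  have hinj : Function.Injective (algebraMap ℤ ℂ) := by simpa using Int.cast_injective
  have hq0 : p.map (algebraMap ℤ ℂ) ≠ 0 := (Polynomial.map_ne_zero_iff hinj).2 hp0
  have hroot : (p.map (algebraMap ℤ ℂ)).IsRoot z := by
    rw [Polynomial.IsRoot, ← Polynomial.eval₂_eq_eval_map, ← Polynomial.aeval_def, hz]
  have hlt := Polynomial.IsRoot.norm_lt_cauchyBound hq0 hroot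
  have hcoeff : ∀ i, ‖(p.map (algebraMap ℤ ℂ)).coeff i‖₊ ≤ 1 := by
    intro i
    rw [← NNReal.coe_le_coe, coe_nnnorm, Polynomial.coeff_map, eq_intCast, Complex.norm_intCast,
      NNReal.coe_one]
    exact_mod_cast hp i
  have hlead : 1 ≤ ‖(p.map (algebraMap ℤ ℂ)).leadingCoeff‖₊ := by
    rw [Polynomial.leadingCoeff_map_of_injective hinj, ← NNReal.coe_le_coe, coe_nnnorm,
      eq_intCast, Complex.norm_intCast, NNReal.coe_one]
    exact_mod_cast Int.one_le_abs (Polynomial.leadingCoeff_ne_zero.2 hp0)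
  have hb : (p.map (algebraMap ℤ ℂ)).cauchyBound ≤ 1 + 1 := by
    rw [Polynomial.cauchyBound]
    gcongr
    exact div_le_one_of_le₀ ((Finset.sup_le fun i _ => hcoeff i).trans hlead) zero_le
  have := hlt.le.trans hb
  rw [← NNReal.coe_le_coe] at this
  norm_num at this
  exact this

lemma FlatRoot.isIntegral {z : ℂ} (h : FlatRoot z) : IsIntegral ℤ z := by
  obtain ⟨p, hp0, hp, hz⟩ := h
  have h1 : |p.leadingCoeff| = 1 :=
    le_antisymm (hp _) (Int.one_le_abs (Polynomial.leadingCoeff_ne_zero.2 hp0))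
  rcases (abs_eq (zero_le_one)).1 h1 with h | h
  · exact ⟨p, h, by simpa [Polynomial.aeval_def] using hz⟩
  · refine ⟨-p, by simp [Polynomial.Monic, h], ?_⟩
    rw [Polynomial.eval₂_neg, ← Polynomial.aeval_def, hz, neg_zero]

/-- Only finitely many numbers of bounded degree are roots of polynomials with coefficients in
`{-1, 0, 1}`: they are algebraic integers all of whose conjugates have modulus at most `2`. -/
lemma finite_lowDeg_flatRoot (k : ℕ) : {z : ℂ | LowDeg k z ∧ FlatRoot z}.Finite := by
  let C : ℕ := Nat.ceil (max 2 1 ^ k * (k.choose (k / 2)) : ℝ)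
  refine (Polynomial.bUnion_roots_finite (algebraMap ℤ ℂ) k
    (Set.finite_Icc (-C : ℤ) C)).subset fun z hz => ?_
  obtain ⟨hd, hf⟩ := hz
  have hi := hf.isIntegral
  have hdeg : (minpoly ℤ z).natDegree ≤ k := by
    rw [← (minpoly.monic hi).natDegree_map (algebraMap ℤ ℚ),
      ← minpoly.isIntegrallyClosed_eq_field_fractions' ℚ hi]
    exact hd.2.le
  simp only [Set.mem_iUnion]
  refine ⟨minpoly ℤ z, ⟨hdeg, fun i => ?_⟩, ?_⟩
  · rw [Set.mem_Icc, ← abs_le, ← @Int.cast_le ℝ]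
    have hb := Polynomial.coeff_bdd_of_roots_le (B := 2) (algebraMap ℤ ℂ) (minpoly.monic hi)
      (IsAlgClosed.splits _) hdeg (fun w hw => by
        apply norm_le_two_of_flatRoot
        obtain ⟨p, hp0, hp, hz⟩ := hf
        refine ⟨p, hp0, hp, ?_⟩
        obtain ⟨q, rfl⟩ := minpoly.isIntegrallyClosed_dvd hi hz
        rw [map_mul, Polynomial.aeval_def, Polynomial.eval₂_eq_eval_map,
          (Polynomial.isRoot_of_mem_roots hw).eq_zero, zero_mul]) i
    refine le_trans ?_ (hb.trans (Nat.le_ceil _))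
    rw [Polynomial.coeff_map]
    simp
  · rw [Finset.mem_coe, Multiset.mem_toFinset, Polynomial.mem_roots
      ((minpoly.monic hi).map _).ne_zero, Polynomial.IsRoot, ← Polynomial.eval₂_eq_eval_map,
      ← Polynomial.aeval_def, minpoly.aeval]

lemma eventually_poly_le_two_pow (A n q : ℕ) (hq : 0 < q) :
    ∃ d₀ : ℕ, ∀ d ≥ d₀, A * d ^ n ≤ 2 ^ (d / q) := by
  have h1 : Tendsto (fun t : ℕ => (t : ℝ) ^ n / (2 : ℝ) ^ t) atTop (nhds 0) :=
    tendsto_pow_const_div_const_pow_of_one_lt n (by norm_num)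
  have h2 := (h1.comp (tendsto_add_atTop_nat 1)).const_mul ((A : ℝ) * q ^ n * 2)
  rw [mul_zero] at h2
  have h3 := h2.eventually (gt_mem_nhds (show (0 : ℝ) < 1 by norm_num))
  obtain ⟨t₀, ht₀⟩ := eventually_atTop.1 h3
  refine ⟨t₀ * q, fun d hd => ?_⟩
  have ht := ht₀ (d / q) ((Nat.le_div_iff_mul_le hq).2 hd)
  simp only [Function.comp_apply] at ht
  have hd' : d ≤ q * (d / q + 1) := (Nat.lt_mul_div_succ d hq).le
  have hpow : (0 : ℝ) < 2 ^ (d / q + 1) := by positivity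
  have h4 : (A : ℝ) * q ^ n * 2 * ((d / q + 1 : ℕ) : ℝ) ^ n < 2 ^ (d / q + 1) := by
    rw [← mul_div_assoc, div_lt_one hpow] at ht
    exact ht
  have h5 : A * q ^ n * 2 * (d / q + 1) ^ n < 2 ^ (d / q + 1) := by exact_mod_cast h4
  have h6 : A * d ^ n ≤ A * (q * (d / q + 1)) ^ n := by gcongr
  rw [mul_pow] at h6
  rw [pow_succ] at h5
  nlinarith

/-- Anti-concentration along a line of monomials: unless `y` is a root of unity of bounded order,
every atom of a random signed sum containing the terms `± a * y ^ j` for `j ≤ d` has probability at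
most `1 / (2 n d ^ n)`. If `y` is not algebraic of degree at most `2 n`, this is the Halász-type
bound. Otherwise some bounded power `z` of `y` is not a root of any polynomial with coefficients in
`{-1, 0, 1}`, so that all signed sums of the powers of `z` are distinct. -/
lemma signCount_line_le (n : ℕ) : ∃ K d₀ : ℕ, ∀ d ≥ d₀, ∀ y : ℂ, y ≠ 0 →
    (∀ j, 1 ≤ j → j ≤ K → y ^ j ≠ 1) → ∀ {ι : Type} [Fintype ι] (v : ι → ℂ) (e : Fin (d + 1) → ι),
    Function.Injective e → ∀ a : ℂ, a ≠ 0 → (∀ j, v (e j) = a * y ^ (j : ℕ)) →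
    ∀ c, signCount v c * (2 * n * d ^ n) ≤ 2 ^ Fintype.card ι := by
  set k := 2 * n + 1 with hk
  have hfin := finite_lowDeg_flatRoot k
  set K := hfin.toFinset.card with hK
  obtain ⟨d₁, hd₁⟩ := eventually_poly_le_two_pow (2 * n) n (K + 1) (Nat.succ_pos K)
  refine ⟨K, max d₁ ((2 * k) ^ k * (2 * n) ^ 2), ?_⟩
  intro d hd y hy hroot ι _ v e he a ha hv c
  by_cases hlow : LowDeg k y
  · obtain ⟨m, hm1, hmK, hm⟩ : ∃ m, 1 ≤ m ∧ m ≤ K + 1 ∧ ¬ FlatRoot (y ^ m) := by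
      by_contra! hcon
      have hmaps : ∀ m ∈ Finset.Icc 1 (K + 1), y ^ m ∈ hfin.toFinset := by
        intro m hm
        rw [Finset.mem_Icc] at hm
        rw [Set.Finite.mem_toFinset]
        exact ⟨hlow.pow m, hcon m hm.1 hm.2⟩
      obtain ⟨p, hp, q, hq, hne, hpq⟩ := Finset.exists_ne_map_eq_of_card_lt_of_maps_to
        (by simp [← hK]) hmaps
      wlog hlt : p < q generalizing p q
      · exact this q hq p hp hne.symm hpq.symm (by omega)
      rw [Finset.mem_Icc] at hp hq
      apply hroot (q - p) (by omega) (by omega)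
      have : y ^ p * y ^ (q - p) = y ^ p * 1 := by
        rw [← pow_add, Nat.add_sub_cancel' hlt.le, hpq, mul_one]
      exact mul_left_cancel₀ (pow_ne_zero _ hy) this
    have hM : ∀ i : Fin (d / m + 1), m * i < d + 1 := fun i =>
      Nat.lt_succ_of_le ((Nat.mul_le_mul_left m (Nat.le_of_lt_succ i.2)).trans (Nat.mul_div_le d m))
    have h1 := signCount_le_of_injective (fun i : Fin (d / m + 1) => e ⟨m * i, hM i⟩)
      (fun i j hij => by
        have := he hij
        rw [Fin.mk.injEq] at this
        exact Fin.ext (Nat.eq_of_mul_eq_mul_left hm1 this)) v (B := 1) (by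
        intro c
        simp only [hv, pow_mul]
        refine signCount_le_one ha (fun u hu h0 => ?_) c
        by_contra hne
        refine hm ⟨vecPoly u, fun h => hne (vecPoly_eq_zero h), fun i => ?_, ?_⟩
        · rw [vecPoly_coeff]
          split_ifs
          · exact hu _
          · simp
        · rw [aeval_vecPoly, h0]) c
    rw [Fintype.card_fin, one_mul] at h1
    refine le_trans (Nat.mul_le_mul_left _ ?_) h1
    calc 2 * n * d ^ n ≤ 2 ^ (d / (K + 1)) := hd₁ d (le_trans (le_max_left _ _) hd)
      _ ≤ 2 ^ (d / m + 1) := Nat.pow_le_pow_right (by norm_num)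
        ((Nat.div_le_div_left hmK hm1).trans (Nat.le_succ _))
  · have hind := eq_zero_of_not_lowDeg hlow
    have hB : ∀ c, signCount (fun j => v (e j)) c * (2 * n * d ^ n) ≤ 2 ^ (d + 1) := by
      intro c
      simp only [hv]
      have h := signCount_geom_sq_le (k := k) (by omega) hy ha hind (d + 1) c
      set S := signCount (fun j : Fin (d + 1) => a * y ^ (j : ℕ)) c
      rcases Nat.eq_zero_or_pos d with hd0 | hd0
      · have : n = 0 := by
          by_contra hn
          have : 0 < (2 * k) ^ k * (2 * n) ^ 2 := by positivity
          have := (le_max_right _ _).trans hd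
          omega
        simp [this]
      have h2 : (S * (2 * n * d ^ n)) ^ 2 * d ≤ (2 ^ (d + 1)) ^ 2 * d := by
        calc (S * (2 * n * d ^ n)) ^ 2 * d = (2 * n) ^ 2 * (S ^ 2 * d ^ k) := by
              rw [hk]; ring
          _ ≤ (2 * n) ^ 2 * (S ^ 2 * (d + 1) ^ k) := by gcongr; omega
          _ ≤ (2 * n) ^ 2 * ((2 * k) ^ k * 4 ^ (d + 1)) := by gcongr
          _ = 4 ^ (d + 1) * ((2 * k) ^ k * (2 * n) ^ 2) := by ring
          _ ≤ 4 ^ (d + 1) * d := by gcongr; exact (le_max_right _ _).trans hd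
          _ = _ := by rw [← pow_mul, mul_comm (d + 1) 2, pow_mul]; norm_num
      exact (Nat.pow_le_pow_iff_left two_ne_zero).1 (Nat.le_of_mul_le_mul_right h2 hd0)
    rcases Nat.eq_zero_or_pos (2 * n * d ^ n) with h0 | h0
    · simp [h0]
    · have h1 := signCount_le_of_injective e he v (B := 2 ^ (d + 1) / (2 * n * d ^ n))
        (fun c => (Nat.le_div_iff_mul_le h0).2 (hB c)) c
      rw [Fintype.card_fin] at h1
      have h3 : signCount v c * (2 * n * d ^ n) * 2 ^ (d + 1) ≤
          2 ^ Fintype.card ι * 2 ^ (d + 1) := by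
        calc signCount v c * (2 * n * d ^ n) * 2 ^ (d + 1)
            = signCount v c * 2 ^ (d + 1) * (2 * n * d ^ n) := by ring
          _ ≤ 2 ^ (d + 1) / (2 * n * d ^ n) * 2 ^ Fintype.card ι * (2 * n * d ^ n) := by gcongr
          _ = 2 ^ Fintype.card ι * (2 ^ (d + 1) / (2 * n * d ^ n) * (2 * n * d ^ n)) := by ring
          _ ≤ _ := by gcongr; exact Nat.div_mul_le_self _ _
      exact Nat.le_of_mul_le_mul_right h3 (by positivity)

/-- For any nonzero `y`, every atom of a random signed sum containing the terms `± a * y ^ j` for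
`j ≤ d` has probability at most `(2 / (d + 1)) ^ (1 / 2)`. -/
lemma signCount_line_sq_le {d : ℕ} {y : ℂ} (hy : y ≠ 0) {ι : Type} [Fintype ι] (v : ι → ℂ)
    (e : Fin (d + 1) → ι) (he : Function.Injective e) {a : ℂ} (ha : a ≠ 0)
    (hv : ∀ j, v (e j) = a * y ^ (j : ℕ)) (c : ℂ) :
    signCount v c ^ 2 * (d + 1) ≤ 2 * (2 ^ Fintype.card ι) ^ 2 := by
  have hB : ∀ c, signCount (fun j => v (e j)) c ≤ Nat.sqrt (2 * 4 ^ (d + 1) / (d + 1)) := by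
    intro c
    simp only [hv]
    have h := signCount_geom_sq_le (k := 1) le_rfl hy ha (by
      intro u hu
      funext i
      fin_cases i
      simpa using hu) (d + 1) c
    rw [Nat.le_sqrt', Nat.le_div_iff_mul_le (Nat.succ_pos d)]
    simpa using h
  have h1 := signCount_le_of_injective e he v hB c
  rw [Fintype.card_fin] at h1
  have h2 : Nat.sqrt (2 * 4 ^ (d + 1) / (d + 1)) ^ 2 * (d + 1) ≤ 2 * 4 ^ (d + 1) :=
    (Nat.mul_le_mul_right _ (Nat.sqrt_le' _)).trans (Nat.div_mul_le_self _ _)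
  have h4 : 4 ^ (d + 1) = (2 ^ (d + 1)) ^ 2 := by
    rw [← pow_mul, mul_comm, pow_mul]; norm_num
  refine Nat.le_of_mul_le_mul_right (c := (2 ^ (d + 1)) ^ 2) ?_ (by positivity)
  calc signCount v c ^ 2 * (d + 1) * (2 ^ (d + 1)) ^ 2
      = (signCount v c * 2 ^ (d + 1)) ^ 2 * (d + 1) := by ring
    _ ≤ (Nat.sqrt (2 * 4 ^ (d + 1) / (d + 1)) * 2 ^ Fintype.card ι) ^ 2 * (d + 1) := by gcongr
    _ = Nat.sqrt (2 * 4 ^ (d + 1) / (d + 1)) ^ 2 * (d + 1) * (2 ^ Fintype.card ι) ^ 2 := by ring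
    _ ≤ 2 * 4 ^ (d + 1) * (2 ^ Fintype.card ι) ^ 2 := by gcongr
    _ = _ := by rw [h4]; ring

/-! ### Zero patterns and double sampling -/

/-- The number of zero patterns of a family of functions `F a` on a finite set `τ` is at most the
dimension of a space containing the products of the `F a`: the products of the functions
that do not vanish at a given point form a triangular system. -/
lemma card_le_finrank_of_patterns {α τ : Type*} [Fintype α] [Fintype τ] (F : α → τ → ℂ)
    (hF : Function.Injective fun t => Finset.univ.filter fun a => F a t ≠ 0)
    (W : Submodule ℂ (τ → ℂ)) (hW : ∀ s : Finset α, (fun t => ∏ a ∈ s, F a t) ∈ W) :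
    Fintype.card τ ≤ Module.finrank ℂ W := by
  set S : τ → Finset α := fun t => Finset.univ.filter fun a => F a t ≠ 0 with hS
  have hne : ∀ t t', ∏ a ∈ S t, F a t' ≠ 0 ↔ S t ⊆ S t' := by
    intro t t'
    rw [Finset.prod_ne_zero_iff]
    simp [hS, Finset.subset_iff]
  let g : τ → W := fun t => ⟨_, hW (S t)⟩
  have hli : LinearIndependent ℂ g := by
    rw [Fintype.linearIndependent_iff]
    intro b hb
    by_contra! hcon
    -- Evaluate a vanishing combination at a point of its support with smallest pattern.
    obtain ⟨t, ht, hmin⟩ := Finset.exists_min_image (Finset.univ.filter fun t => b t ≠ 0)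
      (fun t => (S t).card) (by simpa [Finset.Nonempty] using hcon)
    rw [Finset.mem_filter] at ht
    have h0 : ∑ t', b t' * ∏ a ∈ S t', F a t = 0 := by
      have := congrFun (congrArg Subtype.val hb) t
      simpa [g] using this
    rw [Finset.sum_eq_single t] at h0
    · exact (mul_ne_zero ht.2 ((hne t t).2 subset_rfl)) h0
    · intro t' _ htt'
      by_contra h
      have h1 := mul_ne_zero_iff.1 h
      have h2 := (hne t' t).1 h1.2
      have h3 := hmin t' (by simpa using h1.1)
      exact htt' (hF (Finset.eq_of_subset_of_card_le h2 h3))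
    · simp
  exact hli.fintype_card_le_finrank

/-- The zero patterns of `α` polynomials of degree at most `d` in `m` variables number at most
`(|α| d + 1) ^ m`. -/
lemma card_patterns_le {α τ : Type*} [Fintype α] [Fintype τ] {m d : ℕ}
    (P : α → MvPolynomial (Fin m) ℂ) (hP : ∀ a, (P a).totalDegree ≤ d) (u : τ → Fin m → ℂ)
    (hF : Function.Injective fun t => Finset.univ.filter fun a => (P a).eval (u t) ≠ 0) :
    Fintype.card τ ≤ (Fintype.card α * d + 1) ^ m := by
  let D := Fintype.card α * d
  let mono : (Fin m → Fin (D + 1)) → τ → ℂ := fun e t => ∏ i, u t i ^ (e i : ℕ)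
  let W : Submodule ℂ (τ → ℂ) := Submodule.span ℂ (Set.range mono)
  have hW : ∀ s : Finset α, (fun t => ∏ a ∈ s, (P a).eval (u t)) ∈ W := by
    intro s
    have hdeg : (∏ a ∈ s, P a).totalDegree ≤ D := by
      refine (MvPolynomial.totalDegree_finsetProd _ _).trans ?_
      refine (Finset.sum_le_card_nsmul s _ d fun a _ => hP a).trans ?_
      rw [smul_eq_mul]
      exact Nat.mul_le_mul_right _ (Finset.card_le_univ s)
    have heq : (fun t => ∏ a ∈ s, (P a).eval (u t)) =
        ∑ e ∈ (∏ a ∈ s, P a).support, (∏ a ∈ s, P a).coeff e • fun t => ∏ i, u t i ^ e i := by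
      funext t
      rw [← MvPolynomial.eval_prod, MvPolynomial.eval_eq']
      simp
    rw [heq]
    refine Submodule.sum_mem _ fun e he => Submodule.smul_mem _ _ (Submodule.subset_span ?_)
    have hei : ∀ i, e i < D + 1 := fun i => Nat.lt_succ_of_le
      (((MvPolynomial.monomial_le_degreeOf i he).trans
        (MvPolynomial.degreeOf_le_totalDegree _ i)).trans hdeg)
    exact ⟨fun i => ⟨e i, hei i⟩, rfl⟩
  refine (card_le_finrank_of_patterns (fun a t => (P a).eval (u t)) hF W hW).trans ?_
  refine (finrank_range_le_card mono).trans ?_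
  simp [D]

lemma card_eval_mem_mul {β Ω : Type*} [Fintype β] [DecidableEq β] [Fintype Ω] (Z : Ω → Prop) (q : β) :
    (Finset.univ.filter fun F : β → Ω => Z (F q)).card * Fintype.card Ω =
      (Finset.univ.filter Z).card * Fintype.card (β → Ω) := by
  have h : (Finset.univ.filter fun F : β → Ω => Z (F q)) =
      Fintype.piFinset fun r => if r = q then Finset.univ.filter Z else Finset.univ := by
    ext F
    simp only [Finset.mem_filter, Finset.mem_univ, true_and, Fintype.mem_piFinset]
    constructor
    · intro hF r
      split_ifs with h
      · simpa [h] using hF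
      · simp
    · intro hF
      simpa using hF q
  rw [h, Fintype.card_piFinset, Fintype.card_fun, ← Finset.mul_prod_erase _ _ (Finset.mem_univ q),
    if_pos rfl, Finset.prod_congr rfl (g := fun _ => Fintype.card Ω), Finset.prod_const,
    Finset.card_erase_of_mem (Finset.mem_univ q), Finset.card_univ, mul_assoc, ← pow_succ,
    Nat.sub_add_cancel (Fintype.card_pos_iff.2 ⟨q⟩)]
  intro r hr
  rw [if_neg (Finset.ne_of_mem_erase hr), Finset.card_univ]

/-- Double sampling. Suppose that each `Z x` has probability at most `1 / (2 n L)`, and that among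
any `n × L` samples, at most `D` of the `L ^ n` transversals of the grid are exactly the set of
samples in some `Z x`. Then `n` independent samples lie in a common `Z x` with probability at most
`2 D / L ^ n`: if they do, then with probability at least `1 / 2` none of the further samples
of a grid lies in `Z x`. -/
lemma double_sampling {X Ω : Type*} [Fintype Ω] {n L D : ℕ} (Z : X → Ω → Prop)
    (hZ : ∀ x, (Finset.univ.filter (Z x)).card * (2 * (n * L)) ≤ Fintype.card Ω)
    (hD : ∀ F : Fin n × Fin L → Ω, (Finset.univ.filter fun τ : Fin n → Fin L =>
      ∃ x, ∀ q, Z x (F q) ↔ q.2 = τ q.1).card ≤ D) :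
    (Finset.univ.filter fun f : Fin n → Ω => ∃ x, ∀ i, Z x (f i)).card * L ^ n ≤
      2 * D * Fintype.card Ω ^ n := by
  set E := Finset.univ.filter fun f : Fin n → Ω => ∃ x, ∀ i, Z x (f i) with hE
  let Grid := Fin n × Fin L → Ω
  let G : (Fin n → Fin L) → Finset Grid := fun τ =>
    Finset.univ.filter fun F => ∃ x, ∀ q, Z x (F q) ↔ q.2 = τ q.1
  have hsum : ∑ τ, (G τ).card ≤ D * Fintype.card Grid := by
    calc ∑ τ, (G τ).card
        = ∑ F : Grid, (Finset.univ.filter fun τ : Fin n → Fin L =>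
            ∃ x, ∀ q, Z x (F q) ↔ q.2 = τ q.1).card := by
          simp only [G, Finset.card_filter]
          exact Finset.sum_comm
      _ ≤ ∑ F : Grid, D := Finset.sum_le_sum fun F _ => hD F
      _ = _ := by rw [Finset.sum_const, Finset.card_univ, smul_eq_mul, mul_comm]
  have hhalf : ∀ x, Fintype.card Grid ≤
      2 * (Finset.univ.filter fun F : Grid => ∀ q, ¬ Z x (F q)).card := by
    intro x
    rcases Nat.eq_zero_or_pos (Fintype.card Ω) with h0 | hpos
    · have : IsEmpty Ω := Fintype.card_eq_zero_iff.1 h0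
      have h : (Finset.univ.filter fun F : Grid => ∀ q, ¬ Z x (F q)) = Finset.univ :=
        Finset.filter_true_of_mem fun F _ q => (this.false (F q)).elim
      rw [h, Finset.card_univ]
      omega
    have hbad : 2 * (Finset.univ.filter fun F : Grid => ¬ ∀ q, ¬ Z x (F q)).card ≤
        Fintype.card Grid := by
      have hsub : (Finset.univ.filter fun F : Grid => ¬ ∀ q, ¬ Z x (F q)) ⊆
          Finset.univ.biUnion fun q => Finset.univ.filter fun F : Grid => Z x (F q) := by
        intro F hF
        simpa using hF
      have hcard := (Finset.card_le_card hsub).trans Finset.card_biUnion_le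
      refine Nat.le_of_mul_le_mul_right (c := Fintype.card Ω) ?_ hpos
      calc 2 * (Finset.univ.filter fun F : Grid => ¬ ∀ q, ¬ Z x (F q)).card * Fintype.card Ω
          ≤ 2 * (∑ q, (Finset.univ.filter fun F : Grid => Z x (F q)).card) * Fintype.card Ω := by
            gcongr
        _ = 2 * ∑ q : Fin n × Fin L, (Finset.univ.filter (Z x)).card * Fintype.card Grid := by
            rw [mul_assoc, Finset.sum_mul]
            exact congrArg _ (Finset.sum_congr rfl fun q _ => card_eval_mem_mul (Z x) q)
        _ = (Finset.univ.filter (Z x)).card * (2 * (n * L)) * Fintype.card Grid := by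
            rw [Finset.sum_const, Finset.card_univ, smul_eq_mul, Fintype.card_prod,
              Fintype.card_fin, Fintype.card_fin]
            ring
        _ ≤ Fintype.card Ω * Fintype.card Grid := by gcongr; exact hZ x
        _ = _ := mul_comm _ _
    have hadd := Finset.card_filter_add_card_filter_not (s := (Finset.univ : Finset Grid))
      (fun F : Grid => ∀ q, ¬ Z x (F q))
    rw [Finset.card_univ] at hadd
    omega
  have hG : ∀ τ, E.card * Fintype.card Grid ≤ 2 * ((G τ).card * Fintype.card Ω ^ n) := by
    intro τ
    let T : Finset ((Fin n → Ω) × Grid) := Finset.univ.filter fun p =>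
      ∃ x, (∀ i, Z x (p.1 i)) ∧ ∀ q, ¬ Z x (p.2 q)
    have hT : T.card ≤ (G τ).card * Fintype.card Ω ^ n := by
      have hc : (G τ).card * Fintype.card Ω ^ n =
          (G τ ×ˢ (Finset.univ : Finset (Fin n → Ω))).card := by
        rw [Finset.card_product, Finset.card_univ, Fintype.card_fun, Fintype.card_fin]
      rw [hc]
      -- Write the sample `p.1` over the grid `p.2` along `τ`, and remember what was overwritten.
      refine Finset.card_le_card_of_injOn
        (fun p => (fun q => if q.2 = τ q.1 then p.1 q.1 else p.2 q, fun i => p.2 (i, τ i))) ?_ ?_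
      · intro p hp
        obtain ⟨x, hx1, hx2⟩ := (Finset.mem_filter.1 hp).2
        simp only [Finset.coe_product, Set.mem_prod, Finset.mem_coe, Finset.mem_univ, and_true, G,
          Finset.mem_filter, true_and]
        refine ⟨x, fun q => ?_⟩
        split_ifs with h
        · simp [h, hx1]
        · simp [h, hx2]
      · rintro ⟨f, F⟩ _ ⟨f', F'⟩ _ h
        rw [Prod.mk.injEq] at h
        obtain ⟨h1, h2⟩ := h
        rw [Prod.mk.injEq]
        constructor
        · funext i
          simpa using congrFun h1 (i, τ i)
        · funext q
          by_cases hq : q.2 = τ q.1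
          · have := congrFun h2 q.1
            rwa [← hq] at this
          · simpa [hq] using congrFun h1 q
    have hT' : E.card * Fintype.card Grid ≤ 2 * T.card := by
      have hTs : T.card = ∑ f : Fin n → Ω, (Finset.univ.filter fun F : Grid =>
          ∃ x, (∀ i, Z x (f i)) ∧ ∀ q, ¬ Z x (F q)).card := by
        simp only [T, Finset.card_filter]
        exact Fintype.sum_prod_type _
      rw [hTs, Finset.mul_sum, ← smul_eq_mul, ← Finset.sum_const]
      refine (Finset.sum_le_sum fun f hf => ?_).trans
        (Finset.sum_le_sum_of_subset (Finset.subset_univ E))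
      obtain ⟨x, hx⟩ := (Finset.mem_filter.1 hf).2
      refine (hhalf x).trans (Nat.mul_le_mul_left _ (Finset.card_le_card ?_))
      intro F hF
      rw [Finset.mem_filter] at hF ⊢
      exact ⟨hF.1, x, hx, hF.2⟩
    exact hT'.trans (Nat.mul_le_mul_left _ hT)
  rcases Nat.eq_zero_or_pos (Fintype.card Grid) with h0 | hpos
  · have hΩ : Fintype.card Ω = 0 ∧ n ≠ 0 := by
      rw [Fintype.card_fun, Fintype.card_prod, Fintype.card_fin, Fintype.card_fin] at h0
      refine ⟨pow_eq_zero_iff (n := n * L) ?_ |>.1 h0, ?_⟩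
      · intro h; simp [h] at h0
      · rintro rfl; simp at h0
    have hE0 : E.card ≤ 0 := by
      refine (Finset.card_le_univ _).trans ?_
      rw [Fintype.card_fun, hΩ.1, Fintype.card_fin, zero_pow hΩ.2]
    simp [Nat.le_zero.1 hE0]
  · refine Nat.le_of_mul_le_mul_right (c := Fintype.card Grid) ?_ hpos
    calc E.card * L ^ n * Fintype.card Grid
        = ∑ τ : Fin n → Fin L, E.card * Fintype.card Grid := by
          have hc : Fintype.card (Fin n → Fin L) = L ^ n := by simp
          rw [Finset.sum_const, Finset.card_univ, hc, smul_eq_mul]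
          ring
      _ ≤ ∑ τ, 2 * ((G τ).card * Fintype.card Ω ^ n) := Finset.sum_le_sum fun τ _ => hG τ
      _ = 2 * (∑ τ, (G τ).card) * Fintype.card Ω ^ n := by
          rw [← Finset.mul_sum, ← Finset.sum_mul]; ring
      _ ≤ 2 * (D * Fintype.card Grid) * Fintype.card Ω ^ n := by gcongr
      _ = _ := by ring

/-! ### Normalised torus points -/

/-- The values of the monomials of degree exactly `d` at the point `(1, u)`, extended by zero to all
exponents in `A_d`. Since top-degree parts are homogeneous, every torus point may be normalised to
have first coordinate `1`. -/
noncomputable def topVec {m d : ℕ} (u : Fin m → ℂ) (J : Idx (m + 1) d) : ℂ :=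
  if (∑ j, (J.1 j : ℕ)) = d then ∏ l, u l ^ (J.1 l.succ : ℕ) else 0

/-- The top-degree form with sign vector `ω` vanishes at the point `(1, u)`. -/
def Vanish {m d : ℕ} (u : Fin m → ℂ) (ω : Idx (m + 1) d → Bool) : Prop :=
  ∑ J, sgn (ω J) * topVec u J = 0

lemma fTop_eq {m d : ℕ} (ε : Signs (m + 1) d) (i : Fin (m + 1)) (x : Fin (m + 1) → ℂ)
    (hx : x 0 ≠ 0) :
    fTop (m + 1) d ε i x =
      x 0 ^ d * ∑ J, sgn (ε i J) * topVec (fun l => x l.succ / x 0) J := by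
  rw [fTop, Finset.sum_filter, Finset.mul_sum]
  refine Finset.sum_congr rfl fun J _ => ?_
  unfold topVec
  split_ifs with h
  · have h1 : ∏ j, x j ^ (J.1 j : ℕ) =
        x 0 ^ d * ∏ l : Fin m, (x l.succ / x 0) ^ (J.1 l.succ : ℕ) := by
      have hpow : x 0 ^ d = x 0 ^ (J.1 0 : ℕ) * ∏ l : Fin m, x 0 ^ (J.1 l.succ : ℕ) := by
        rw [Finset.prod_pow_eq_pow_sum, ← pow_add, ← Fin.sum_univ_succ fun j => (J.1 j : ℕ)]
        exact congrArg _ h.symm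
      rw [hpow, Fin.prod_univ_succ, mul_assoc, ← Finset.prod_mul_distrib]
      congr 1
      refine Finset.prod_congr rfl fun l _ => ?_
      rw [← mul_pow, mul_div_cancel₀ _ hx]
    rw [h1]
    ring
  · simp

/-- The exponent vectors of the monomials `x₀ ^ (d - j) * xᵢ ^ j`. -/
def lineIdx {m d : ℕ} (i : Fin m) (j : Fin (d + 1)) : Idx (m + 1) d :=
  ⟨Fin.cons ⟨d - j, by omega⟩ fun l => if l = i then j else 0, by
    rw [Fin.sum_univ_succ]
    simp only [Fin.cons_zero, Fin.cons_succ, apply_ite Fin.val, Fin.val_zero]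
    rw [Finset.sum_ite_eq' Finset.univ i]
    simp only [Finset.mem_univ, if_true]
    omega⟩

lemma lineIdx_injective {m d : ℕ} (i : Fin m) :
    Function.Injective (lineIdx i : Fin (d + 1) → Idx (m + 1) d) := by
  intro j j' h
  have := congrFun (congrArg Subtype.val h) i.succ
  simpa [lineIdx] using this

lemma topVec_lineIdx {m d : ℕ} (u : Fin m → ℂ) (i : Fin m) (j : Fin (d + 1)) :
    topVec u (lineIdx i j) = 1 * u i ^ (j : ℕ) := by
  have hsum : (∑ l, ((lineIdx i j).1 l : ℕ)) = d := by
    rw [Fin.sum_univ_succ]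
    simp only [lineIdx, Fin.cons_zero, Fin.cons_succ, apply_ite Fin.val, Fin.val_zero]
    rw [Finset.sum_ite_eq' Finset.univ i]
    simp only [Finset.mem_univ, if_true]
    omega
  rw [topVec, if_pos hsum, one_mul, Finset.prod_eq_single i]
  · simp [lineIdx]
  · intro l _ hl
    simp [lineIdx, hl]
  · simp

lemma card_vanish {m d : ℕ} (u : Fin m → ℂ) :
    (Finset.univ.filter (Vanish (d := d) u)).card = signCount (topVec (d := d) u) 0 := by
  unfold signCount
  refine congrArg Finset.card (Finset.ext fun ω => ?_)
  simp only [Finset.mem_filter, Finset.mem_univ, true_and, Vanish]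

/-- The dehomogenised top-degree form with sign vector `ω`. -/
noncomputable def topPoly {m d : ℕ} (ω : Idx (m + 1) d → Bool) : MvPolynomial (Fin m) ℂ :=
  ∑ J ∈ Finset.univ.filter (fun J : Idx (m + 1) d => (∑ j, (J.1 j : ℕ)) = d),
    MvPolynomial.C (sgn (ω J)) * ∏ l, MvPolynomial.X l ^ (J.1 l.succ : ℕ)

lemma eval_topPoly {m d : ℕ} (ω : Idx (m + 1) d → Bool) (u : Fin m → ℂ) :
    (topPoly ω).eval u = ∑ J, sgn (ω J) * topVec u J := by
  rw [topPoly, map_sum, Finset.sum_filter]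
  refine Finset.sum_congr rfl fun J _ => ?_
  unfold topVec
  split_ifs <;> simp

lemma totalDegree_topPoly_le {m d : ℕ} (ω : Idx (m + 1) d → Bool) :
    (topPoly ω).totalDegree ≤ d := by
  refine MvPolynomial.totalDegree_finsetSum_le fun J hJ => ?_
  refine (MvPolynomial.totalDegree_mul _ _).trans ?_
  rw [MvPolynomial.totalDegree_C, zero_add]
  refine (MvPolynomial.totalDegree_finsetProd _ _).trans ?_
  have h := J.2
  rw [Fin.sum_univ_succ] at h
  simp only [MvPolynomial.totalDegree_X_pow]
  omega

/-! ### Points that are not torsion of bounded order -/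

/-- Double sampling, applied to the points having a coordinate which is not a root of unity of
order at most `K`. -/
lemma card_bad_le {m K d₀ : ℕ} (hK : ∀ d ≥ d₀, ∀ y : ℂ, y ≠ 0 →
    (∀ j, 1 ≤ j → j ≤ K → y ^ j ≠ 1) → ∀ {ι : Type} [Fintype ι] (v : ι → ℂ) (e : Fin (d + 1) → ι),
    Function.Injective e → ∀ a : ℂ, a ≠ 0 → (∀ j, v (e j) = a * y ^ (j : ℕ)) →
    ∀ c, signCount v c * (2 * (m + 1) * d ^ (m + 1)) ≤ 2 ^ Fintype.card ι)
    {d : ℕ} (hd : d₀ ≤ d) :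
    (Finset.univ.filter fun ε : Signs (m + 1) d =>
      ∃ u : {u : Fin m → ℂ // (∀ l, u l ≠ 0) ∧ ∃ i, ∀ j, 1 ≤ j → j ≤ K → u i ^ j ≠ 1},
        ∀ i, Vanish u.1 (ε i)).card * (d ^ (m + 1)) ^ (m + 1) ≤
      2 * ((m + 1) * d ^ (m + 1) * d + 1) ^ m *
        Fintype.card (Idx (m + 1) d → Bool) ^ (m + 1) := by
  refine double_sampling (n := m + 1) (L := d ^ (m + 1))
    (D := ((m + 1) * d ^ (m + 1) * d + 1) ^ m) (fun (u : {u : Fin m → ℂ // (∀ l, u l ≠ 0) ∧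
      ∃ i, ∀ j, 1 ≤ j → j ≤ K → u i ^ j ≠ 1}) (ω : Idx (m + 1) d → Bool) => Vanish u.1 ω) ?_ ?_
  · rintro ⟨u, hu, i, hi⟩
    have h := hK d hd (u i) (hu i) hi (topVec u) (lineIdx i) (lineIdx_injective i) 1 one_ne_zero
      (topVec_lineIdx u i) 0
    rw [← card_vanish, mul_assoc 2] at h
    rw [Fintype.card_fun, Fintype.card_bool]
    exact h
  · intro F
    rw [← Fintype.card_subtype]
    let T := {τ : Fin (m + 1) → Fin (d ^ (m + 1)) //
      ∃ u : {u : Fin m → ℂ // (∀ l, u l ≠ 0) ∧ ∃ i, ∀ j, 1 ≤ j → j ≤ K → u i ^ j ≠ 1},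
        ∀ q, Vanish u.1 (F q) ↔ q.2 = τ q.1}
    choose w hw using fun τ : T => τ.2
    have h := card_patterns_le (fun q => topPoly (F q)) (fun q => totalDegree_topPoly_le (F q))
      (fun τ : T => (w τ).1) (by
        intro τ τ' h
        -- The transversal can be read off from the zero pattern.
        refine Subtype.ext (funext fun i => ?_)
        have h1 := Finset.ext_iff.1 h (i, τ.1 i)
        simp only [Finset.mem_filter, Finset.mem_univ, true_and, eval_topPoly] at h1
        exact (hw τ' (i, τ.1 i)).1 ((not_iff_not.1 h1).1 ((hw τ (i, τ.1 i)).2 rfl)))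
    rwa [Fintype.card_prod, Fintype.card_fin, Fintype.card_fin] at h

/-! ### Torsion points of bounded order -/

lemma card_two_rows {Ω : Type*} [Fintype Ω] {n : ℕ} (Z : Ω → Prop) (p q : Fin n) (hpq : p ≠ q) :
    (Finset.univ.filter fun F : Fin n → Ω => Z (F p) ∧ Z (F q)).card * Fintype.card Ω ^ 2 =
      (Finset.univ.filter Z).card ^ 2 * Fintype.card Ω ^ n := by
  have h : (Finset.univ.filter fun F : Fin n → Ω => Z (F p) ∧ Z (F q)) =
      Fintype.piFinset fun r => if r = p ∨ r = q then Finset.univ.filter Z else Finset.univ := by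
    ext F
    simp only [Finset.mem_filter, Finset.mem_univ, true_and, Fintype.mem_piFinset]
    constructor
    · intro hF r
      split_ifs with h
      · rcases h with rfl | rfl
        · simpa using hF.1
        · simpa using hF.2
      · simp
    · intro hF
      have h1 := hF p
      have h2 := hF q
      simp only [true_or, or_true, if_true, Finset.mem_filter, Finset.mem_univ, true_and] at h1 h2
      exact ⟨h1, h2⟩
  have hc : ∀ r : Fin n, (if r = p ∨ r = q then Finset.univ.filter Z else Finset.univ).card =
      if r ∈ ({p, q} : Finset (Fin n)) then (Finset.univ.filter Z).card else Fintype.card Ω := by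
    intro r
    simp only [Finset.mem_insert, Finset.mem_singleton]
    split_ifs <;> simp
  rw [h, Fintype.card_piFinset]
  simp_rw [hc]
  rw [Finset.prod_ite, Finset.prod_const, Finset.prod_const]
  have e1 : (Finset.univ.filter fun r => r ∈ ({p, q} : Finset (Fin n))).card = 2 := by
    rw [Finset.filter_mem_eq_inter, Finset.univ_inter, Finset.card_pair hpq]
  have e2 := Finset.card_filter_add_card_filter_not (s := (Finset.univ : Finset (Fin n)))
    (fun r => r ∈ ({p, q} : Finset (Fin n)))
  rw [e1, Finset.card_univ, Fintype.card_fin] at e2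
  rw [e1, mul_assoc, ← pow_add, add_comm _ 2, e2]

/-- Two independent top-degree forms vanish at a given torus point with probability at most
`2 / (d + 1)`. -/
lemma card_good_le {m d : ℕ} (i : Fin m) (u : Fin m → ℂ) (hu : u i ≠ 0) :
    (Finset.univ.filter fun ε : Signs (m + 1) d => ∀ j, Vanish u (ε j)).card * (d + 1) ≤
      2 * Fintype.card (Idx (m + 1) d → Bool) ^ (m + 1) := by
  have h1 := signCount_line_sq_le (d := d) hu (topVec u) (lineIdx i) (lineIdx_injective i)
    one_ne_zero (topVec_lineIdx u i) 0
  have h2 := card_two_rows (Ω := Idx (m + 1) d → Bool) (Vanish u) (0 : Fin (m + 1)) i.succ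
    (Fin.succ_ne_zero i).symm
  have h4 : Fintype.card (Idx (m + 1) d → Bool) = 2 ^ Fintype.card (Idx (m + 1) d) := by
    rw [Fintype.card_fun, Fintype.card_bool]
  rw [← card_vanish, ← h4] at h1
  have hpos : 0 < Fintype.card (Idx (m + 1) d → Bool) := Fintype.card_pos
  have hsub : (Finset.univ.filter fun ε : Signs (m + 1) d => ∀ j, Vanish u (ε j)).card ≤
      (Finset.univ.filter fun ε : Signs (m + 1) d => Vanish u (ε 0) ∧ Vanish u (ε i.succ)).card := by
    refine Finset.card_le_card fun ε hε => ?_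
    rw [Finset.mem_filter] at hε ⊢
    exact ⟨hε.1, hε.2 _, hε.2 _⟩
  refine (Nat.mul_le_mul_right _ hsub).trans ?_
  refine Nat.le_of_mul_le_mul_right (c := Fintype.card (Idx (m + 1) d → Bool) ^ 2) ?_
    (by positivity)
  calc _ = (Finset.univ.filter fun ε : Signs (m + 1) d =>
          Vanish u (ε 0) ∧ Vanish u (ε i.succ)).card *
          Fintype.card (Idx (m + 1) d → Bool) ^ 2 * (d + 1) := by ring
    _ = (Finset.univ.filter (Vanish (d := d) u)).card ^ 2 * (d + 1) *
          Fintype.card (Idx (m + 1) d → Bool) ^ (m + 1) := by rw [h2]; ring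
    _ ≤ 2 * Fintype.card (Idx (m + 1) d → Bool) ^ 2 *
          Fintype.card (Idx (m + 1) d → Bool) ^ (m + 1) := by gcongr
    _ = _ := by ring

lemma finite_torsion (K : ℕ) : {z : ℂ | ∃ j, 1 ≤ j ∧ j ≤ K ∧ z ^ j = 1}.Finite := by
  have h : {z : ℂ | ∃ j, 1 ≤ j ∧ j ≤ K ∧ z ^ j = 1} ⊆
      ⋃ j ∈ Finset.Icc 1 K, ↑(Polynomial.nthRoots j (1 : ℂ)).toFinset := by
    rintro z ⟨j, hj1, hjK, hz⟩
    simp only [Set.mem_iUnion]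
    refine ⟨j, Finset.mem_Icc.2 ⟨hj1, hjK⟩, ?_⟩
    simpa [Polynomial.mem_nthRoots hj1] using hz
  refine Set.Finite.subset ?_ h
  exact Set.Finite.biUnion (Finset.finite_toSet _) fun j _ => Finset.finite_toSet _

/-! ### The probability bound -/

theorem stmt6 (n : ℕ) (hn : 2 ≤ n) :
    ∃ C : ℝ, 0 < C ∧ ∀ d : ℕ, 1 ≤ d →
      Pd n d {ε : Signs n d |
          ∃ x : Fin n → ℂ, (∀ j, x j ≠ 0) ∧ ∀ i, fTop n d ε i x = 0} ≤ C / d := by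
  obtain ⟨m, rfl⟩ : ∃ m, n = m + 1 := ⟨n - 1, by omega⟩
  obtain ⟨K, d₀, hK⟩ := signCount_line_le (m + 1)
  set U := (finite_torsion K).toFinset with hU
  set V : Finset (Fin m → ℂ) := Fintype.piFinset fun _ => U with hV
  refine ⟨d₀ + 1 + 2 * (m + 2) ^ m + 2 * V.card, by positivity, fun d hd => ?_⟩
  have hd0 : (0 : ℝ) < d := by exact_mod_cast hd
  set N := Fintype.card (Idx (m + 1) d → Bool) with hN
  have hNpos : 0 < N := Fintype.card_pos
  have hcard : Fintype.card (Signs (m + 1) d) = N ^ (m + 1) := by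
    rw [Fintype.card_fun, Fintype.card_fin]
  set E : Set (Signs (m + 1) d) :=
    {ε | ∃ x : Fin (m + 1) → ℂ, (∀ j, x j ≠ 0) ∧ ∀ i, fTop (m + 1) d ε i x = 0} with hE
  have hNR : (0 : ℝ) < (N : ℝ) ^ (m + 1) := by positivity
  rw [Pd, hcard, div_le_div_iff₀ (by exact_mod_cast hNR) hd0]
  push_cast
  rcases lt_or_ge d d₀ with hlt | hge
  · have h1 : (E.ncard : ℝ) ≤ (N : ℝ) ^ (m + 1) := by
      have : E.ncard ≤ N ^ (m + 1) := by
        rw [← hcard, ← Nat.card_eq_fintype_card]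
        exact Set.ncard_le_card E
      exact_mod_cast this
    have h2 : (d : ℝ) ≤ d₀ := by exact_mod_cast hlt.le
    calc (E.ncard : ℝ) * d ≤ (N : ℝ) ^ (m + 1) * d₀ := by gcongr
      _ = d₀ * (N : ℝ) ^ (m + 1) := mul_comm _ _
      _ ≤ _ := by
        gcongr
        have : (0 : ℝ) ≤ 2 * (m + 2) ^ m + 2 * V.card := by positivity
        linarith
  · set E₁ := Finset.univ.filter fun ε : Signs (m + 1) d =>
      ∃ u : {u : Fin m → ℂ // (∀ l, u l ≠ 0) ∧ ∃ i, ∀ j, 1 ≤ j → j ≤ K → u i ^ j ≠ 1},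
        ∀ i, Vanish u.1 (ε i) with hE₁
    set E₂ := V.biUnion fun u => Finset.univ.filter fun ε : Signs (m + 1) d =>
      ∀ i, Vanish u (ε i) with hE₂
    have hsub : E ⊆ ↑(E₁ ∪ E₂) := by
      rintro ε ⟨x, hx, hzero⟩
      have hv : ∀ i, Vanish (fun l => x l.succ / x 0) (ε i) := by
        intro i
        have h := hzero i
        rw [fTop_eq ε i x (hx 0)] at h
        exact (mul_eq_zero.1 h).resolve_left (pow_ne_zero _ (hx 0))
      rw [Finset.coe_union]
      by_cases hbad : ∃ i : Fin m, ∀ j, 1 ≤ j → j ≤ K → (x i.succ / x 0) ^ j ≠ 1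
      · left
        rw [hE₁, Finset.mem_coe, Finset.mem_filter]
        exact ⟨Finset.mem_univ _, ⟨_, fun l => div_ne_zero (hx _) (hx 0), hbad⟩, hv⟩
      · right
        push Not at hbad
        rw [hE₂, Finset.mem_coe, Finset.mem_biUnion]
        refine ⟨_, ?_, Finset.mem_filter.2 ⟨Finset.mem_univ _, hv⟩⟩
        rw [hV, Fintype.mem_piFinset]
        intro i
        rw [hU, Set.Finite.mem_toFinset]
        obtain ⟨j, h1, h2, h3⟩ := hbad i
        exact ⟨j, h1, h2, h3⟩
    have hEcard : E.ncard ≤ E₁.card + E₂.card := by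
      refine (Set.ncard_le_ncard hsub (Finset.finite_toSet _)).trans ?_
      rw [Set.ncard_coe_finset]
      exact Finset.card_union_le _ _
    have hb₁ : E₁.card * d ≤ 2 * (m + 2) ^ m * N ^ (m + 1) := by
      have h := card_bad_le (m := m) (K := K) (d₀ := d₀) (by simpa using hK) hge
      have h5 : (m + 1) * d ^ (m + 1) * d + 1 ≤ (m + 2) * d ^ (m + 2) := by
        have : 1 ≤ d ^ (m + 2) := Nat.one_le_pow _ _ hd
        have e : (m + 1) * d ^ (m + 1) * d = (m + 1) * d ^ (m + 2) := by ring
        rw [e]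
        nlinarith
      -- The exponents satisfy `(m + 1) ^ 2 = (m + 2) * m + 1`.
      have h6 : (d ^ (m + 1)) ^ (m + 1) = d * (d ^ (m + 2)) ^ m := by ring
      refine Nat.le_of_mul_le_mul_right (c := (d ^ (m + 2)) ^ m) ?_ (by positivity)
      calc E₁.card * d * (d ^ (m + 2)) ^ m = E₁.card * (d ^ (m + 1)) ^ (m + 1) := by
            rw [h6]; ring
        _ ≤ _ := h
        _ ≤ 2 * ((m + 2) * d ^ (m + 2)) ^ m * N ^ (m + 1) := by gcongr
        _ = _ := by rw [mul_pow]; ring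
    have hb₂ : E₂.card * d ≤ 2 * V.card * N ^ (m + 1) := by
      have i₀ : Fin m := ⟨0, by omega⟩
      calc E₂.card * d
          ≤ (∑ u ∈ V, (Finset.univ.filter fun ε : Signs (m + 1) d =>
              ∀ i, Vanish u (ε i)).card) * d := Nat.mul_le_mul_right _ Finset.card_biUnion_le
        _ ≤ ∑ u ∈ V, 2 * N ^ (m + 1) := by
            rw [Finset.sum_mul]
            refine Finset.sum_le_sum fun u hu => ?_
            refine (Nat.mul_le_mul_left _ (Nat.le_succ d)).trans (card_good_le i₀ u ?_)
            obtain ⟨j, hj, -, hj1⟩ :=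
              (Set.Finite.mem_toFinset _).1 (Fintype.mem_piFinset.1 hu i₀)
            intro h0
            rw [h0, zero_pow (by omega)] at hj1
            exact zero_ne_one hj1
        _ = _ := by rw [Finset.sum_const, smul_eq_mul]; ring
    have htot : E.ncard * d ≤ (2 * (m + 2) ^ m + 2 * V.card) * N ^ (m + 1) := by
      calc E.ncard * d ≤ (E₁.card + E₂.card) * d := Nat.mul_le_mul_right _ hEcard
        _ = E₁.card * d + E₂.card * d := add_mul _ _ _
        _ ≤ _ := by rw [add_mul]; exact Nat.add_le_add hb₁ hb₂
    have htotR : (E.ncard : ℝ) * d ≤ (2 * (m + 2) ^ m + 2 * V.card) * (N : ℝ) ^ (m + 1) := by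
      exact_mod_cast htot
    refine htotR.trans ?_
    gcongr
    have : (0 : ℝ) ≤ d₀ := Nat.cast_nonneg _
    linarith
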